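/- (Quantitative non-convergence for polygonal neighborhoods, second-order kernel case.) Let N ≥ 3 be an integer and L₂ > 0. Let γ : (0,1] → [0,∞) satisfy ∫₀¹ ρ³ γ(ρ) dρ < ∞, γ continuously differentiable on an open interval containing [cos(π/N), 1], γ(1) = 0, and (d/dt)(π t³ γ(t)) ≤ −L₂ for all t ∈ [cos(π/N), 1]. Let S ⊂ ℝ² be a finite set with at most N elements, all lying on the unit circle {ξ : |ξ| = 1}, and let P be the convex hull of S. Then for each coordinate index i ∈ {1,2}, ∫_{B̄₁(0) \ P} ξ_i² γ(|ξ|) dξ ≥ (2 L₂ / π) · σ_{L,2}(π/N), where B̄₁(0) is the closed unit disk and σ_{L,2}(s) = (5/8) sin(2s) − (s/4) cos(2s) − cos(s) · log(tan(s/2 + π/4)). -/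

import Mathlib

open MeasureTheory Metric Set Real

noncomputable section

/-- `σ_{L,2}(s) = (5/8)·sin(2s) − (s/4)·cos(2s) − cos(s)·log(tan(s/2 + π/4))`. -/
def sigmaL2 (s : ℝ) : ℝ :=
  (5 / 8) * Real.sin (2 * s) - (s / 4) * Real.cos (2 * s) -
    Real.cos s * Real.log (Real.tan (s / 2 + π / 4))

/-!
Among any `N` directions in the plane there is a gap: some unit vector `v` makes an angle of at
least `π / N` with all of them, so the convex hull of `S` misses the circular segment
`cos (π / N) < ⟪v, ξ⟫` of the unit disk. There the derivative bound, integrated from `‖ξ‖` to `1`,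
gives `γ ‖ξ‖ ≥ L₂ * (1 - ‖ξ‖) / (π * ‖ξ‖ ^ 3)`. In polar coordinates around `v` the integral of
this lower bound becomes that of `cos (u - ψ) ^ 2` against an even weight which decreases with
`|u|`, where `ψ` is the angle from `v` to the coordinate axis. Because `cos (2 * u)` has
nonnegative integral against such a weight, the axis orthogonal to `v` is the worst case; there
the integral is elementary and equals `sigmaL2 (π / N)` up to the constant.
-/

lemma image_sub_le_mul_sub_of_deriv_le_neg {D : Set ℝ} (hD : Convex ℝ D) {f : ℝ → ℝ} {C : ℝ}
    (hC : C < 0) (hf : ∀ x ∈ D, deriv f x ≤ C) {x y : ℝ} (hx : x ∈ D) (hy : y ∈ D)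
    (hxy : x ≤ y) : f y - f x ≤ C * (y - x) := by
  have hdiff : ∀ z ∈ D, DifferentiableAt ℝ f z := fun z hz =>
    differentiableAt_of_deriv_ne_zero ((hf z hz).trans_lt hC).ne
  exact hD.image_sub_le_mul_sub_of_deriv_le
    (fun z hz => (hdiff z hz).continuousAt.continuousWithinAt)
    (fun z hz => (hdiff z (interior_subset hz)).differentiableWithinAt)
    (fun z hz => hf z (interior_subset hz)) x hx y hy hxy

section AngularIntegral

lemma integral_mul_cos_two_mul_nonneg {w : ℝ → ℝ} {s : ℝ} (hs0 : 0 ≤ s) (hs : s ≤ π / 2)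
    (hw : AntitoneOn w (Icc 0 s)) (hws : 0 ≤ w s) :
    0 ≤ ∫ u in (0 : ℝ)..s, w u * cos (2 * u) := by
  -- `cos (2 * u)` changes sign at `π / 4`, so replacing `w` by its value there
  -- decreases the integral.
  set m := min s (π / 4)
  have hm : m ∈ Icc 0 s := ⟨le_min hs0 (by positivity), min_le_left _ _⟩
  have hws' : 0 ≤ w m := hws.trans (hw hm (right_mem_Icc.2 hs0) hm.2)
  have hle : ∀ u ∈ Icc 0 s, w m * cos (2 * u) ≤ w u * cos (2 * u) := by
    rintro u ⟨hu0, hus⟩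
    rcases le_total u (π / 4) with hu | hu
    · have hcos : 0 ≤ cos (2 * u) := cos_nonneg_of_mem_Icc ⟨by linarith [pi_pos], by linarith⟩
      gcongr
      exact hw ⟨hu0, hus⟩ hm (le_min hus hu)
    · have hcos : cos (2 * u) ≤ 0 :=
        cos_nonpos_of_pi_div_two_le_of_le (by linarith) (by linarith)
      exact mul_le_mul_of_nonpos_right (hw hm ⟨hu0, hus⟩ ((min_le_right _ _).trans hu)) hcos
  have hwi : IntervalIntegrable w volume 0 s :=
    AntitoneOn.intervalIntegrable (by rwa [uIcc_of_le hs0])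
  calc (0 : ℝ) ≤ w m * (sin (2 * s) / 2) :=
        mul_nonneg hws' (div_nonneg
          (sin_nonneg_of_nonneg_of_le_pi (by linarith) (by linarith)) zero_le_two)
    _ = ∫ u in (0 : ℝ)..s, w m * cos (2 * u) := by
        rw [intervalIntegral.integral_const_mul,
          intervalIntegral.integral_comp_mul_left (f := cos) two_ne_zero, integral_cos]
        simp [inv_mul_eq_div]
    _ ≤ ∫ u in (0 : ℝ)..s, w u * cos (2 * u) :=
        intervalIntegral.integral_mono_on hs0 (Continuous.intervalIntegrable (by fun_prop) _ _)
          (hwi.mul_continuousOn (by fun_prop)) hle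

lemma integral_neg_self_eq_integral_add_comp_neg {E : Type*} [NormedAddCommGroup E]
    [NormedSpace ℝ E] {f : ℝ → E} {s : ℝ}
    (hf : IntervalIntegrable f volume (-s) 0) (hf' : IntervalIntegrable f volume 0 s) :
    ∫ u in (-s)..s, f u = ∫ u in (0 : ℝ)..s, (f u + f (-u)) := by
  have hneg : IntervalIntegrable (fun u => f (-u)) volume 0 s := by
    simpa using (IntervalIntegrable.iff_comp_neg (by simp)).1 hf.symm
  rw [← intervalIntegral.integral_add_adjacent_intervals hf hf',
    intervalIntegral.integral_add hf' hneg, intervalIntegral.integral_comp_neg, neg_zero, add_comm]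

lemma two_mul_integral_sin_sq_mul_le {w : ℝ → ℝ} {s : ℝ} (hs0 : 0 ≤ s) (hs : s ≤ π / 2)
    (hw : AntitoneOn w (Icc 0 s)) (hws : 0 ≤ w s) (hweven : w.Even) (ψ : ℝ) :
    2 * ∫ u in (0 : ℝ)..s, sin u ^ 2 * w u ≤ ∫ u in (-s)..s, cos (u - ψ) ^ 2 * w u := by
  have hwi : IntervalIntegrable w volume 0 s :=
    AntitoneOn.intervalIntegrable (by rwa [uIcc_of_le hs0])
  have hwi' : IntervalIntegrable w volume (-s) 0 := by
    simpa [hweven _] using ((IntervalIntegrable.iff_comp_neg (by simp)).1 hwi).symm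
  have hpair : ∀ u, cos (u - ψ) ^ 2 * w u + cos (-u - ψ) ^ 2 * w (-u) =
      2 * (sin u ^ 2 * w u) + 2 * cos ψ ^ 2 * (w u * cos (2 * u)) := by
    intro u
    rw [hweven u, cos_two_mul, cos_sub, cos_sub, cos_neg, sin_neg]
    linear_combination 2 * w u * sin u ^ 2 * sin_sq_add_cos_sq ψ
      - 2 * w u * cos ψ ^ 2 * sin_sq_add_cos_sq u
  rw [integral_neg_self_eq_integral_add_comp_neg (hwi'.continuousOn_mul (by fun_prop))
    (hwi.continuousOn_mul (by fun_prop))]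
  simp only [hpair]
  rw [intervalIntegral.integral_add ((hwi.continuousOn_mul (by fun_prop)).const_mul 2)
      ((hwi.mul_continuousOn (by fun_prop)).const_mul _),
    intervalIntegral.integral_const_mul, intervalIntegral.integral_const_mul]
  have := integral_mul_cos_two_mul_nonneg hs0 hs hw hws
  exact le_add_of_nonneg_right (by positivity)

lemma hasDerivAt_log_tan_half_add_pi_div_four {u : ℝ} (hu : u ∈ Ioo (-(π / 2)) (π / 2)) :
    HasDerivAt (fun u => log (tan (u / 2 + π / 4))) (1 / cos u) u := by
  obtain ⟨hu1, hu2⟩ := hu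
  have hcos : 0 < cos (u / 2 + π / 4) := cos_pos_of_mem_Ioo ⟨by linarith, by linarith⟩
  have hsin : 0 < sin (u / 2 + π / 4) := sin_pos_of_pos_of_lt_pi (by linarith) (by linarith)
  have htan : tan (u / 2 + π / 4) ≠ 0 := by rw [tan_eq_sin_div_cos]; positivity
  have hlin : HasDerivAt (fun u : ℝ => u / 2 + π / 4) (1 / 2) u :=
    ((hasDerivAt_id u).div_const 2).add_const _
  have htan' : HasDerivAt (fun u => tan (u / 2 + π / 4))
      (1 / cos (u / 2 + π / 4) ^ 2 * (1 / 2)) u :=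
    HasDerivAt.comp (h₂ := tan) u (hasDerivAt_tan hcos.ne') hlin
  refine (htan'.log htan).congr_deriv ?_
  have hdouble : cos u = 2 * sin (u / 2 + π / 4) * cos (u / 2 + π / 4) := by
    rw [← sin_two_mul, ← sin_add_pi_div_two]
    ring_nf
  rw [hdouble, tan_eq_sin_div_cos]
  field_simp

/-- Twice the integral of `1 - r` over the part `cos s / cos u ≤ r ≤ 1` of the ray at angle `u`
that lies in the circular segment of half-angle `s`. -/
def segmentWeight (s u : ℝ) : ℝ := (1 - cos s / cos u) ^ 2

lemma segmentWeight_nonneg (s u : ℝ) : 0 ≤ segmentWeight s u := sq_nonneg _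

lemma segmentWeight_even (s : ℝ) : (segmentWeight s).Even := fun u => by
  simp only [segmentWeight, cos_neg]

lemma cos_div_cos_le_one {s u : ℝ} (hs : s < π / 2) (hu : |u| ≤ s) : cos s / cos u ≤ 1 := by
  have hcos : cos s ≤ cos u := by
    rw [← cos_abs u]
    exact cos_le_cos_of_nonneg_of_le_pi (abs_nonneg u) (by linarith [pi_pos]) hu
  exact div_le_one_of_le₀ hcos (cos_nonneg_of_mem_Icc (abs_le.1 (hu.trans hs.le)))

lemma antitoneOn_segmentWeight {s : ℝ} (hs : s < π / 2) :
    AntitoneOn (segmentWeight s) (Icc 0 s) := by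
  rintro u ⟨hu0, hus⟩ v ⟨hv0, hvs⟩ huv
  have hv : 0 < cos v := cos_pos_of_mem_Ioo ⟨by linarith [pi_pos], by linarith⟩
  have hs' : 0 < cos s := cos_pos_of_mem_Ioo ⟨by linarith [pi_pos], hs⟩
  have hcos : cos v ≤ cos u := cos_le_cos_of_nonneg_of_le_pi hu0 (by linarith [pi_pos]) huv
  have hle : cos s / cos v ≤ 1 := cos_div_cos_le_one hs ((abs_of_nonneg hv0).trans_le hvs)
  unfold segmentWeight
  gcongr

lemma hasDerivAt_primitive_sin_sq_mul_segmentWeight (s : ℝ) {u : ℝ}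
    (hu : u ∈ Ioo (-(π / 2)) (π / 2)) :
    HasDerivAt (fun u => u / 2 - sin (2 * u) / 4
        - 2 * cos s * (log (tan (u / 2 + π / 4)) - sin u) + cos s ^ 2 * (tan u - u))
      (sin u ^ 2 * segmentWeight s u) u := by
  have hcos : 0 < cos u := cos_pos_of_mem_Ioo hu
  have hsin2 : HasDerivAt (fun u : ℝ => sin (2 * u)) (cos (2 * u) * (2 * 1)) u :=
    ((hasDerivAt_id u).const_mul 2).sin
  have hderiv := ((((hasDerivAt_id u).div_const 2).sub (hsin2.div_const 4)).sub
    (((hasDerivAt_log_tan_half_add_pi_div_four hu).sub (hasDerivAt_sin u)).const_mul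
      (2 * cos s))).add (((hasDerivAt_tan hcos.ne').sub (hasDerivAt_id u)).const_mul (cos s ^ 2))
  refine hderiv.congr_deriv ?_
  rw [segmentWeight, sin_sq, cos_two_mul]
  field_simp
  ring

lemma integral_sin_sq_mul_segmentWeight {s : ℝ} (hs0 : 0 ≤ s) (hs : s < π / 2) :
    ∫ u in (0 : ℝ)..s, sin u ^ 2 * segmentWeight s u = 2 * sigmaL2 s := by
  have hw : AntitoneOn (segmentWeight s) (uIcc 0 s) := by
    rw [uIcc_of_le hs0]
    exact antitoneOn_segmentWeight hs
  have hcos : cos s ≠ 0 := (cos_pos_of_mem_Ioo ⟨by linarith [pi_pos], hs⟩).ne'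
  rw [intervalIntegral.integral_eq_sub_of_hasDerivAt (fun u hu => by
    rw [uIcc_of_le hs0] at hu
    exact hasDerivAt_primitive_sin_sq_mul_segmentWeight s
      ⟨by linarith [hu.1, pi_pos], by linarith [hu.2]⟩)
    (hw.intervalIntegrable.continuousOn_mul (by fun_prop))]
  have htan : cos s ^ 2 * tan s = sin s * cos s := by
    rw [tan_eq_sin_div_cos]
    field_simp
  simp only [sigmaL2, sin_two_mul, cos_two_mul, zero_div, zero_add, tan_pi_div_four, log_one,
    sin_zero, tan_zero, mul_zero, sub_zero]
  linear_combination htan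

lemma four_mul_sigmaL2_le_integral {s : ℝ} (hs0 : 0 ≤ s) (hs : s < π / 2) (ψ : ℝ) :
    4 * sigmaL2 s ≤ ∫ u in (-s)..s, cos (u - ψ) ^ 2 * segmentWeight s u :=
  calc 4 * sigmaL2 s = 2 * ∫ u in (0 : ℝ)..s, sin u ^ 2 * segmentWeight s u := by
        rw [integral_sin_sq_mul_segmentWeight hs0 hs]
        ring
    _ ≤ _ := two_mul_integral_sin_sq_mul_le hs0 hs.le (antitoneOn_segmentWeight hs)
        (segmentWeight_nonneg s s) (segmentWeight_even s) ψ

end AngularIntegral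

open scoped RealInnerProductSpace EuclideanSpace

section CircularSegment

variable {E : Type*} [NormedAddCommGroup E] [InnerProductSpace ℝ E]

/-- The circular segment of half-angle `s` in direction `v`: for a unit vector `v`, the part of the
closed unit disk cut off by the line orthogonal to `v` at distance `cos s` from the origin. -/
def circularSegment (v : E) (s : ℝ) : Set E := {ξ | cos s < ⟪v, ξ⟫ ∧ ‖ξ‖ ≤ 1}

lemma measurableSet_circularSegment [MeasurableSpace E] [BorelSpace E] (v : E) (s : ℝ) :
    MeasurableSet (circularSegment v s) :=
  ((isOpen_lt (g := fun ξ => ⟪v, ξ⟫) continuous_const (by fun_prop)).measurableSet).inter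
    (isClosed_le continuous_norm continuous_const).measurableSet

lemma cos_lt_norm_of_mem_circularSegment {v ξ : E} {s : ℝ} (hv : ‖v‖ = 1)
    (hξ : ξ ∈ circularSegment v s) : cos s < ‖ξ‖ :=
  hξ.1.trans_le (by simpa [hv] using real_inner_le_norm v ξ)

lemma preimage_circularSegment {F : Type*} [NormedAddCommGroup F] [InnerProductSpace ℝ F]
    (f : E ≃ₗᵢ[ℝ] F) (v : E) (s : ℝ) :
    f ⁻¹' circularSegment (f v) s = circularSegment v s := by
  ext ξ
  simp only [circularSegment, mem_preimage, mem_ofPred_eq, f.inner_map_map, f.norm_map]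

/-- The circular segment `circularSegment (1 : ℂ) s` in polar coordinates `(r, u)`. -/
def polarSegment (s : ℝ) : Set (ℝ × ℝ) :=
  {p | p.2 ∈ Ioo (-s) s ∧ p.1 ∈ Ioc (cos s / cos p.2) 1}

lemma measurableSet_polarSegment (s : ℝ) : MeasurableSet (polarSegment s) :=
  (measurable_snd measurableSet_Ioo).inter
    ((measurableSet_lt (by fun_prop) measurable_fst).inter
      (measurableSet_le measurable_fst measurable_const))

lemma polarSegment_subset {s : ℝ} (hs : s < π / 2) :
    polarSegment s ⊆ Icc (cos s) 1 ×ˢ Icc (-s) s := by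
  rintro ⟨r, u⟩ ⟨⟨hu1, hu2⟩, hr, hr1⟩
  have hu : 0 < cos u := cos_pos_of_mem_Ioo ⟨by linarith, by linarith⟩
  have hs' : 0 ≤ cos s := cos_nonneg_of_mem_Icc ⟨by linarith, hs.le⟩
  exact ⟨⟨(le_div_self hs' hu (cos_le_one u)).trans hr.le, hr1⟩, hu1.le, hu2.le⟩

lemma inner_exp_mul_I_polarCoord_symm (ψ : ℝ) (p : ℝ × ℝ) :
    ⟪Complex.exp (ψ * Complex.I), Complex.polarCoord.symm p⟫ = p.1 * cos (p.2 - ψ) := by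
  rw [Complex.inner, Complex.polarCoord_symm_apply, cos_sub, Complex.exp_mul_I]
  simp only [← Complex.ofReal_cos, ← Complex.ofReal_sin, map_add, map_mul, Complex.conj_ofReal,
    Complex.conj_I, mul_neg, Complex.mul_re, Complex.mul_im, Complex.add_re, Complex.add_im,
    Complex.neg_re, Complex.neg_im, Complex.ofReal_re, Complex.ofReal_im, Complex.I_re,
    Complex.I_im, mul_zero, mul_one, zero_mul, add_zero]
  ring

lemma inner_one_polarCoord_symm (p : ℝ × ℝ) :
    ⟪(1 : ℂ), Complex.polarCoord.symm p⟫ = p.1 * cos p.2 := by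
  simpa only [Complex.ofReal_zero, zero_mul, Complex.exp_zero, sub_zero]
    using inner_exp_mul_I_polarCoord_symm 0 p

lemma inner_exp_mul_I (ψ : ℝ) (z : ℂ) :
    ⟪Complex.exp (ψ * Complex.I), z⟫ = ‖z‖ * cos (Complex.arg z - ψ) := by
  have hz : Complex.polarCoord.symm (‖z‖, Complex.arg z) = z := by simp
  simpa only [hz] using inner_exp_mul_I_polarCoord_symm ψ (‖z‖, Complex.arg z)

lemma polarCoord_target_inter_preimage_circularSegment {s : ℝ} (hs0 : 0 ≤ s) (hs : s < π / 2) :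
    polarCoord.target ∩ Complex.polarCoord.symm ⁻¹' circularSegment 1 s = polarSegment s := by
  have hcs : 0 < cos s := cos_pos_of_mem_Ioo ⟨by linarith [pi_pos], hs⟩
  ext ⟨r, u⟩
  simp only [circularSegment, polarSegment, polarCoord_target, mem_inter_iff, mem_prod, mem_Ioi,
    mem_preimage, mem_ofPred_eq, inner_one_polarCoord_symm, Complex.norm_polarCoord_symm]
  constructor
  · rintro ⟨⟨hr, hu⟩, hlt, hr1⟩
    rw [abs_of_pos hr] at hr1
    have hcu : 0 < cos u := pos_of_mul_pos_right (hcs.trans hlt) hr.le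
    have hus : |u| < s := by
      by_contra! hle
      have hcos : cos |u| ≤ cos s :=
        cos_le_cos_of_nonneg_of_le_pi hs0 (abs_le.2 ⟨hu.1.le, hu.2.le⟩) hle
      rw [cos_abs] at hcos
      exact (hlt.trans_le (mul_le_of_le_one_left hcu.le hr1)).not_ge hcos
    exact ⟨abs_lt.1 hus, (div_lt_iff₀ hcu).2 hlt, hr1⟩
  · rintro ⟨hu, hr, hr1⟩
    have hcu : 0 < cos u := cos_pos_of_mem_Ioo ⟨by linarith [hu.1], by linarith [hu.2]⟩
    have hr0 : 0 < r := (div_pos hcs hcu).trans hr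
    rw [abs_of_pos hr0]
    exact ⟨⟨hr0, by linarith [hu.1], by linarith [hu.2]⟩, (div_lt_iff₀ hcu).1 hr, hr1⟩

variable {F : Type*} [NormedAddCommGroup F] [NormedSpace ℝ F]

lemma setIntegral_polarSegment {s : ℝ} (hs0 : 0 ≤ s) (hs : s < π / 2) {h : ℝ × ℝ → F}
    (hh : IntegrableOn h (polarSegment s)) :
    ∫ p in polarSegment s, h p = ∫ u in (-s)..s, ∫ r in (cos s / cos u)..1, h (r, u) := by
  have hind (u r : ℝ) : (polarSegment s).indicator h (r, u) = (Ioo (-s) s).indicator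
      (fun u => (Ioc (cos s / cos u) 1).indicator (fun r => h (r, u)) r) u := by
    classical
    simp only [indicator_apply, polarSegment, mem_ofPred_eq, ite_and]
  rw [← integral_indicator (measurableSet_polarSegment s), Measure.volume_eq_prod,
    integral_prod_symm _ ((integrable_indicator_iff (measurableSet_polarSegment s)).2 hh),
    intervalIntegral.integral_of_le (by linarith), integral_Ioc_eq_integral_Ioo,
    ← integral_indicator measurableSet_Ioo]
  refine integral_congr_ae (.of_forall fun u => ?_)
  simp only [hind]
  by_cases hu : u ∈ Ioo (-s) s
  · simp only [indicator_of_mem hu]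
    rw [integral_indicator measurableSet_Ioc,
      intervalIntegral.integral_of_le (cos_div_cos_le_one hs (abs_lt.2 hu).le)]
  · simp only [indicator_of_notMem hu, integral_zero]

lemma setIntegral_circularSegment_one {s : ℝ} (hs0 : 0 ≤ s) (hs : s < π / 2) {f : ℂ → F}
    (hf : ContinuousOn f {0}ᶜ) :
    ∫ z in circularSegment 1 s, f z =
      ∫ u in (-s)..s, ∫ r in (cos s / cos u)..1, r • f (Complex.polarCoord.symm (r, u)) := by
  have hcs : 0 < cos s := cos_pos_of_mem_Ioo ⟨by linarith [pi_pos], hs⟩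
  have hpolar : Continuous (Complex.polarCoord.symm : ℝ × ℝ → ℂ) := by
    rw [funext Complex.polarCoord_symm_apply]
    fun_prop
  have hcont : ContinuousOn (fun p : ℝ × ℝ => p.1 • f (Complex.polarCoord.symm p))
      (Icc (cos s) 1 ×ˢ Icc (-s) s) :=
    continuousOn_fst.smul (hf.comp hpolar.continuousOn fun p hp => by
      rw [mem_compl_singleton_iff, ← norm_pos_iff, Complex.norm_polarCoord_symm]
      exact abs_pos.2 (hcs.trans_le hp.1.1).ne')
  have hint : IntegrableOn (fun p : ℝ × ℝ => p.1 • f (Complex.polarCoord.symm p))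
      (polarSegment s) :=
    (hcont.integrableOn_compact (isCompact_Icc.prod isCompact_Icc)).mono_set
      (polarSegment_subset hs)
  calc ∫ z in circularSegment 1 s, f z
      = ∫ p in polarCoord.target,
          (Complex.polarCoord.symm ⁻¹' circularSegment 1 s).indicator
            (fun p => p.1 • f (Complex.polarCoord.symm p)) p := by
        rw [← integral_indicator (measurableSet_circularSegment _ _),
          ← Complex.integral_comp_polarCoord_symm]
        classical
        simp only [indicator_apply, mem_preimage, smul_ite, smul_zero]
    _ = ∫ p in polarSegment s, p.1 • f (Complex.polarCoord.symm p) := by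
        rw [setIntegral_indicator (hpolar.measurable (measurableSet_circularSegment _ _)),
          polarCoord_target_inter_preimage_circularSegment hs0 hs]
    _ = _ := setIntegral_polarSegment hs0 hs hint

lemma setIntegral_circularSegment_one_inner_exp_sq {s : ℝ} (hs0 : 0 ≤ s) (hs : s < π / 2)
    (ψ : ℝ) :
    ∫ z in circularSegment (1 : ℂ) s,
        ⟪Complex.exp (ψ * Complex.I), z⟫ ^ 2 * ((1 - ‖z‖) / ‖z‖ ^ 3) =
      (∫ u in (-s)..s, cos (u - ψ) ^ 2 * segmentWeight s u) / 2 := by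
  rw [setIntegral_circularSegment_one hs0 hs, ← intervalIntegral.integral_div]
  · refine intervalIntegral.integral_congr fun u hu => ?_
    rw [uIcc_of_le (by linarith)] at hu
    have hu' : 0 < cos s / cos u :=
      div_pos (cos_pos_of_mem_Ioo ⟨by linarith [pi_pos], hs⟩)
        (cos_pos_of_mem_Ioo ⟨by linarith [hu.1], by linarith [hu.2]⟩)
    have hradial : ∀ r ∈ uIcc (cos s / cos u) 1,
        r • (⟪Complex.exp (ψ * Complex.I), Complex.polarCoord.symm (r, u)⟫ ^ 2 *
          ((1 - ‖Complex.polarCoord.symm (r, u)‖) / ‖Complex.polarCoord.symm (r, u)‖ ^ 3)) =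
        (1 - r) * cos (u - ψ) ^ 2 := by
      intro r hr
      rw [uIcc_of_le (cos_div_cos_le_one hs (abs_le.2 hu))] at hr
      have hr0 : 0 < r := hu'.trans_le hr.1
      rw [inner_exp_mul_I_polarCoord_symm, Complex.norm_polarCoord_symm, abs_of_pos hr0,
        smul_eq_mul]
      field_simp
    rw [intervalIntegral.integral_congr hradial, intervalIntegral.integral_mul_const,
      intervalIntegral.integral_sub (by simp) (by simp), integral_id,
      intervalIntegral.integral_const, segmentWeight, smul_eq_mul]
    ring
  · refine ContinuousOn.mul (by fun_prop) (ContinuousOn.div (by fun_prop) (by fun_prop) ?_)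
    exact fun z hz => pow_ne_zero 3 (norm_ne_zero_iff.2 hz)

end CircularSegment

section AddCircle

variable {T : ℝ} [Fact (0 < T)]

lemma le_card_mul_of_univ_subset_biUnion_closedBall {B : Finset (AddCircle T)} {r : ℝ}
    (hr : 0 ≤ r) (hB : univ ⊆ ⋃ a ∈ B, closedBall a r) : T ≤ B.card * (2 * r) := by
  have hvol := (measure_mono (μ := volume) hB).trans (measure_biUnion_finset_le B _)
  simp only [AddCircle.measure_univ, AddCircle.volume_closedBall, Finset.sum_const,
    nsmul_eq_mul] at hvol
  rw [← ENNReal.ofReal_natCast, ← ENNReal.ofReal_mul (by positivity)] at hvol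
  have hT : 0 < T := Fact.out
  have hle : T ≤ B.card * min T (2 * r) :=
    (ENNReal.ofReal_le_ofReal_iff (by positivity)).1 hvol
  exact hle.trans (by gcongr; exact min_le_right _ _)

lemma exists_forall_div_two_mul_card_le_dist (B : Finset (AddCircle T)) :
    ∃ p, ∀ a ∈ B, T / (2 * B.card) ≤ dist p a := by
  rcases B.eq_empty_or_nonempty with rfl | hne
  · simp
  have : (0 : ℝ) < B.card := by exact_mod_cast hne.card_pos
  obtain ⟨p, -, hp⟩ := (isCompact_univ (X := AddCircle T)).exists_isMaxOn univ_nonempty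
    (continuous_infDist_pt (B : Set (AddCircle T))).continuousOn
  have hcover : univ ⊆ ⋃ a ∈ B, closedBall a (infDist p (B : Set (AddCircle T))) := by
    intro q _
    obtain ⟨a, ha, hqa⟩ := B.finite_toSet.isCompact.exists_infDist_eq_dist hne q
    simp only [mem_iUnion]
    exact ⟨a, ha, by rw [mem_closedBall, ← hqa]; exact hp (mem_univ q)⟩
  refine ⟨p, fun a ha => le_trans ?_ (infDist_le_dist_of_mem (Finset.mem_coe.2 ha))⟩
  rw [div_le_iff₀ (by positivity)]
  linarith [le_card_mul_of_univ_subset_biUnion_closedBall infDist_nonneg hcover]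

end AddCircle

lemma cos_norm_coe_addCircle (x : ℝ) : cos ‖(x : AddCircle (2 * π))‖ = cos x := by
  rw [AddCircle.norm_eq, cos_abs, cos_sub_int_mul_two_pi]

lemma exists_forall_cos_sub_le (A : Finset ℝ) {N : ℕ} (hA : A.card ≤ N) :
    ∃ φ : ℝ, ∀ α ∈ A, cos (α - φ) ≤ cos (π / N) := by
  classical
  have : Fact (0 < 2 * π) := ⟨two_pi_pos⟩
  set B : Finset (AddCircle (2 * π)) := A.image (↑)
  obtain ⟨p, hp⟩ := exists_forall_div_two_mul_card_le_dist B
  obtain ⟨φ, rfl⟩ := QuotientAddGroup.mk_surjective p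
  refine ⟨φ, fun α hα => ?_⟩
  have hαB : (α : AddCircle (2 * π)) ∈ B := Finset.mem_image_of_mem _ hα
  have hBpos : (0 : ℝ) < B.card := by exact_mod_cast Finset.card_pos.2 ⟨_, hαB⟩
  have hdist : π / N ≤ ‖((α - φ : ℝ) : AddCircle (2 * π))‖ :=
    calc π / N ≤ π / B.card := by
          gcongr
          exact Finset.card_image_le.trans hA
      _ = 2 * π / (2 * B.card) := (mul_div_mul_left _ _ two_ne_zero).symm
      _ ≤ dist (φ : AddCircle (2 * π)) α := hp _ hαB
      _ = _ := by rw [dist_comm, dist_eq_norm, AddCircle.coe_sub]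
  have hle_pi : ‖((α - φ : ℝ) : AddCircle (2 * π))‖ ≤ π := by
    simpa [abs_of_pos pi_pos] using
      AddCircle.norm_le_half_period (2 * π) two_pi_pos.ne' (x := ((α - φ : ℝ) : AddCircle (2 * π)))
  rw [← cos_norm_coe_addCircle (α - φ)]
  exact cos_le_cos_of_nonneg_of_le_pi (by positivity) hle_pi hdist

section Plane

open Module

variable {E : Type*} [NormedAddCommGroup E] [InnerProductSpace ℝ E]

lemma exists_linearIsometryEquiv_complex_apply_one_eq [Fact (finrank ℝ E = 2)] {v : E}
    (hv : ‖v‖ = 1) : ∃ f : ℂ ≃ₗᵢ[ℝ] E, f 1 = v := by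
  have : FiniteDimensional ℝ E := FiniteDimensional.of_fact_finrank_eq_two
  obtain ⟨b, hb⟩ := Orthonormal.exists_orthonormalBasis_extension_of_card_eq (𝕜 := ℝ)
    (ι := Fin 2) (Fact.out (p := finrank ℝ E = 2)) (v := fun _ => v) (s := {0})
    ⟨fun _ => hv, fun i j hij => (hij (Subsingleton.elim i j)).elim⟩
  refine ⟨Complex.isometryOfOrthonormal b, ?_⟩
  simpa [Complex.isometryOfOrthonormal_apply] using hb 0 rfl

lemma exists_norm_eq_one_forall_inner_le_cos [Fact (finrank ℝ E = 2)] {S : Set E}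
    (hS : S.Finite) (hS1 : ∀ ξ ∈ S, ‖ξ‖ ≤ 1) {N : ℕ} (hN : 2 ≤ N) (hSN : S.ncard ≤ N) :
    ∃ v : E, ‖v‖ = 1 ∧ ∀ ξ ∈ S, ⟪v, ξ⟫ ≤ cos (π / N) := by
  have : FiniteDimensional ℝ E := FiniteDimensional.of_fact_finrank_eq_two
  have hdim : finrank ℝ E = 2 := Fact.out
  have : Nontrivial E := nontrivial_of_finrank_pos (R := ℝ) (by simp [hdim])
  obtain ⟨e, he⟩ := exists_norm_eq E zero_le_one
  obtain ⟨f, -⟩ := exists_linearIsometryEquiv_complex_apply_one_eq he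
  obtain ⟨φ, hφ⟩ := exists_forall_cos_sub_le
    (hS.toFinset.image fun ξ => Complex.arg (f.symm ξ)) (N := N)
    (Finset.card_image_le.trans (by rwa [← ncard_eq_toFinset_card S hS]))
  have hcos : 0 ≤ cos (π / N) := by
    refine cos_nonneg_of_mem_Icc ⟨by linarith [pi_pos, show 0 ≤ π / N by positivity], ?_⟩
    gcongr
    exact_mod_cast hN
  refine ⟨f (Complex.exp (φ * Complex.I)), by
    rw [f.norm_map, Complex.norm_exp_ofReal_mul_I], fun ξ hξ => ?_⟩
  have hξφ : cos (Complex.arg (f.symm ξ) - φ) ≤ cos (π / N) :=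
    hφ _ (Finset.mem_image_of_mem _ (hS.mem_toFinset.2 hξ))
  calc ⟪f (Complex.exp (φ * Complex.I)), ξ⟫
      = ‖ξ‖ * cos (Complex.arg (f.symm ξ) - φ) := by
        rw [← f.symm.norm_map ξ, ← inner_exp_mul_I, ← f.inner_map_map, f.apply_symm_apply]
    _ ≤ ‖ξ‖ * cos (π / N) := by gcongr
    _ ≤ cos (π / N) := mul_le_of_le_one_left hcos (hS1 ξ hξ)

variable [FiniteDimensional ℝ E] [MeasurableSpace E] [BorelSpace E]

lemma two_mul_sigmaL2_le_setIntegral_circularSegment [Fact (finrank ℝ E = 2)] {v w : E}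
    (hv : ‖v‖ = 1) (hw : ‖w‖ = 1) {s : ℝ} (hs0 : 0 ≤ s) (hs : s < π / 2) :
    2 * sigmaL2 s ≤ ∫ ξ in circularSegment v s, ⟪w, ξ⟫ ^ 2 * ((1 - ‖ξ‖) / ‖ξ‖ ^ 3) := by
  obtain ⟨f, rfl⟩ := exists_linearIsometryEquiv_complex_apply_one_eq hv
  obtain ⟨ψ, hψ⟩ := (Complex.norm_eq_one_iff (f.symm w)).1 (by rwa [f.symm.norm_map])
  rw [← f.measurePreserving.setIntegral_preimage_emb f.toHomeomorph.measurableEmbedding,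
    preimage_circularSegment]
  have hinner (z : ℂ) : ⟪w, f z⟫ = ⟪Complex.exp (ψ * Complex.I), z⟫ := by
    rw [hψ, ← f.inner_map_map, f.apply_symm_apply]
  simp only [hinner, f.norm_map, setIntegral_circularSegment_one_inner_exp_sq hs0 hs]
  linarith [four_mul_sigmaL2_le_integral hs0 hs ψ]

lemma integrableOn_closedBall_inner_sq_mul_norm [Nontrivial E]
    {γ : ℝ → ℝ} {R : ℝ} (hγ : IntegrableOn (fun ρ => ρ ^ (finrank ℝ E + 1) * γ ρ) (Ioc 0 R))
    (w : E) : IntegrableOn (fun ξ => ⟪w, ξ⟫ ^ 2 * γ ‖ξ‖) (closedBall 0 R) := by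
  have hball : closedBall (0 : E) R =ᵐ[volume] ball 0 R := by
    rw [← ball_union_sphere]
    exact union_ae_eq_left_of_ae_eq_empty (ae_eq_empty.2 (Measure.addHaar_sphere volume 0 R))
  have hradial : IntegrableOn (fun ξ : E => ‖ξ‖ ^ 2 * γ ‖ξ‖) (ball 0 R) := by
    rw [integrableOn_fun_norm_addHaar volume (f := fun ρ => ρ ^ 2 * γ ρ)]
    refine (hγ.mono_set Ioo_subset_Ioc_self).congr_fun (fun ρ _ => ?_) measurableSet_Ioo
    have hdim : finrank ℝ E - 1 + 2 = finrank ℝ E + 1 := by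
      have := finrank_pos (R := ℝ) (M := E)
      omega
    rw [smul_eq_mul, ← mul_assoc, ← pow_add, hdim]
  have hbdd := hradial.bdd_mul (f := fun ξ : E => ⟪w, ξ⟫ ^ 2 / ‖ξ‖ ^ 2) (c := ‖w‖ ^ 2)
    (Measurable.aestronglyMeasurable (by fun_prop)) (.of_forall fun ξ => by
      rw [norm_of_nonneg (by positivity), ← sq_abs]
      refine div_le_of_le_mul₀ (by positivity) (by positivity) ?_
      rw [← mul_pow]
      gcongr
      exact abs_real_inner_le_norm w ξ)
  suffices IntegrableOn (fun ξ => ⟪w, ξ⟫ ^ 2 * γ ‖ξ‖) (ball 0 R) from this.congr_set_ae hball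
  refine hbdd.congr (.of_forall fun ξ => ?_)
  rcases eq_or_ne ξ 0 with rfl | hξ
  · simp
  · have : ‖ξ‖ ≠ 0 := norm_ne_zero_iff.2 hξ
    dsimp only
    field_simp

lemma sigmaL2_le_setIntegral_circularSegment [Fact (finrank ℝ E = 2)] {γ : ℝ → ℝ} {L s : ℝ}
    (hL : 0 ≤ L) (hs0 : 0 ≤ s) (hs : s < π / 2)
    (hγ : ∀ t ∈ Icc (cos s) 1, L * (1 - t) ≤ π * t ^ 3 * γ t) {v w : E} (hv : ‖v‖ = 1)
    (hw : ‖w‖ = 1) (hint : IntegrableOn (fun ξ => ⟪w, ξ⟫ ^ 2 * γ ‖ξ‖) (circularSegment v s)) :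
    2 * L / π * sigmaL2 s ≤ ∫ ξ in circularSegment v s, ⟪w, ξ⟫ ^ 2 * γ ‖ξ‖ := by
  have hcs : 0 < cos s := cos_pos_of_mem_Ioo ⟨by linarith [pi_pos], hs⟩
  have hmeas := measurableSet_circularSegment v s
  have hkernel_nonneg : ∀ ξ ∈ circularSegment v s,
      0 ≤ L / π * (⟪w, ξ⟫ ^ 2 * ((1 - ‖ξ‖) / ‖ξ‖ ^ 3)) := by
    intro ξ hξ
    have : 0 ≤ 1 - ‖ξ‖ := sub_nonneg.2 hξ.2
    positivity
  have hkernel_le : ∀ ξ ∈ circularSegment v s,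
      L / π * (⟪w, ξ⟫ ^ 2 * ((1 - ‖ξ‖) / ‖ξ‖ ^ 3)) ≤ ⟪w, ξ⟫ ^ 2 * γ ‖ξ‖ := by
    intro ξ hξ
    have hcξ : cos s < ‖ξ‖ := cos_lt_norm_of_mem_circularSegment hv hξ
    have hξ0 : 0 < ‖ξ‖ := hcs.trans hcξ
    rw [mul_left_comm]
    gcongr
    rw [div_mul_div_comm, div_le_iff₀ (by positivity), mul_comm (γ _)]
    exact hγ _ ⟨hcξ.le, hξ.2⟩
  calc 2 * L / π * sigmaL2 s = L / π * (2 * sigmaL2 s) := by ring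
    _ ≤ L / π * ∫ ξ in circularSegment v s, ⟪w, ξ⟫ ^ 2 * ((1 - ‖ξ‖) / ‖ξ‖ ^ 3) := by
        gcongr
        exact two_mul_sigmaL2_le_setIntegral_circularSegment hv hw hs0 hs
    _ = ∫ ξ in circularSegment v s, L / π * (⟪w, ξ⟫ ^ 2 * ((1 - ‖ξ‖) / ‖ξ‖ ^ 3)) :=
        (integral_const_mul _ _).symm
    _ ≤ ∫ ξ in circularSegment v s, ⟪w, ξ⟫ ^ 2 * γ ‖ξ‖ :=
        integral_mono_of_nonneg (ae_restrict_of_forall_mem hmeas hkernel_nonneg) hint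
          (ae_restrict_of_forall_mem hmeas hkernel_le)

lemma sigmaL2_le_setIntegral_sdiff [Fact (finrank ℝ E = 2)] {γ : ℝ → ℝ} {L s : ℝ}
    (hL : 0 ≤ L) (hs0 : 0 ≤ s) (hs : s < π / 2) (hγ0 : ∀ ρ, 0 < ρ → ρ ≤ 1 → 0 ≤ γ ρ)
    (hγ : ∀ t ∈ Icc (cos s) 1, L * (1 - t) ≤ π * t ^ 3 * γ t)
    (hint : IntegrableOn (fun ρ => ρ ^ 3 * γ ρ) (Ioc 0 1)) {P : Set E} (hP : MeasurableSet P)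
    {v w : E} (hv : ‖v‖ = 1) (hw : ‖w‖ = 1) (hPv : ∀ ξ ∈ P, ⟪v, ξ⟫ ≤ cos s) :
    2 * L / π * sigmaL2 s ≤ ∫ ξ in closedBall 0 1 \ P, ⟪w, ξ⟫ ^ 2 * γ ‖ξ‖ := by
  have hdim : finrank ℝ E = 2 := Fact.out
  have : Nontrivial E := nontrivial_of_finrank_pos (R := ℝ) (by simp [hdim])
  have hintegrable : IntegrableOn (fun ξ : E => ⟪w, ξ⟫ ^ 2 * γ ‖ξ‖) (closedBall 0 1 \ P) :=
    (integrableOn_closedBall_inner_sq_mul_norm (by rwa [hdim]) w).mono_set sdiff_subset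
  have hnonneg : ∀ ξ ∈ closedBall (0 : E) 1 \ P, 0 ≤ ⟪w, ξ⟫ ^ 2 * γ ‖ξ‖ := by
    rintro ξ ⟨hξ, -⟩
    rcases eq_or_ne ξ 0 with rfl | hξ0
    · simp
    · exact mul_nonneg (sq_nonneg _) (hγ0 _ (norm_pos_iff.2 hξ0) (mem_closedBall_zero_iff.1 hξ))
  have hsub : circularSegment v s ⊆ closedBall 0 1 \ P := fun ξ hξ =>
    ⟨mem_closedBall_zero_iff.2 hξ.2, fun hξP => (hPv ξ hξP).not_gt hξ.1⟩
  exact (sigmaL2_le_setIntegral_circularSegment hL hs0 hs hγ hv hw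
    (hintegrable.mono_set hsub)).trans <| setIntegral_mono_set hintegrable
      (ae_restrict_of_forall_mem (measurableSet_closedBall.diff hP) hnonneg) hsub.eventuallyLE

theorem stmt14_general [Fact (finrank ℝ E = 2)] {N : ℕ} (hN : 3 ≤ N) {L₂ : ℝ} (hL₂ : 0 < L₂)
    {γ : ℝ → ℝ} (hγ0 : ∀ ρ, 0 < ρ → ρ ≤ 1 → 0 ≤ γ ρ)
    (hint : IntegrableOn (fun ρ => ρ ^ 3 * γ ρ) (Ioc (0 : ℝ) 1))
    (hder : ∀ t ∈ Icc (cos (π / N)) 1, deriv (fun t => π * t ^ 3 * γ t) t ≤ -L₂)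
    {S : Set E} (hSfin : S.Finite) (hScard : S.ncard ≤ N) (hS : ∀ ξ ∈ S, ‖ξ‖ ≤ 1)
    {w : E} (hw : ‖w‖ = 1) :
    2 * L₂ / π * sigmaL2 (π / N) ≤
      ∫ ξ in closedBall 0 1 \ convexHull ℝ S, ⟪w, ξ⟫ ^ 2 * γ ‖ξ‖ := by
  have hs : π / N < π / 2 := by
    gcongr
    exact_mod_cast hN
  have hγ : ∀ t ∈ Icc (cos (π / N)) 1, L₂ * (1 - t) ≤ π * t ^ 3 * γ t := by
    intro t ht
    have hγ1 : 0 ≤ π * γ 1 := mul_nonneg pi_pos.le (hγ0 1 one_pos le_rfl)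
    have hdrop := image_sub_le_mul_sub_of_deriv_le_neg (convex_Icc _ _) (neg_neg_of_pos hL₂) hder
      ht (right_mem_Icc.2 (cos_le_one _)) ht.2
    linarith
  obtain ⟨v, hv, hSv⟩ := exists_norm_eq_one_forall_inner_le_cos hSfin hS (by omega) hScard
  have hhull : convexHull ℝ S ⊆ {ξ | ⟪v, ξ⟫ ≤ cos (π / N)} :=
    convexHull_min hSv (convex_halfSpace_le (innerₗ E v).isLinear _)
  exact sigmaL2_le_setIntegral_sdiff hL₂.le (by positivity) hs hγ0 hγ hint
    (hSfin.isCompact_convexHull ℝ).measurableSet hv hw hhull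

end Plane

/-- quantitative non-convergence for polygonal neighborhoods,
second-order kernel case. -/
theorem stmt14 (N : ℕ) (hN : 3 ≤ N) (L₂ : ℝ) (hL₂ : 0 < L₂)
    (γ : ℝ → ℝ) (hγ0 : ∀ ρ, 0 < ρ → ρ ≤ 1 → 0 ≤ γ ρ)
    (hint : IntegrableOn (fun ρ => ρ ^ 3 * γ ρ) (Ioc (0 : ℝ) 1))
    (hsmooth : ∃ a b : ℝ, a < Real.cos (π / N) ∧ 1 < b ∧ ContDiffOn ℝ 1 γ (Ioo a b))
    (hγ1 : γ 1 = 0)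
    (hder : ∀ t ∈ Icc (Real.cos (π / N)) 1, deriv (fun t => π * t ^ 3 * γ t) t ≤ -L₂)
    (S : Set (EuclideanSpace ℝ (Fin 2))) (hSfin : S.Finite) (hScard : S.ncard ≤ N)
    (hScirc : ∀ ξ ∈ S, ‖ξ‖ = 1) (i : Fin 2) :
    (2 * L₂ / π) * sigmaL2 (π / N) ≤
      ∫ ξ in closedBall (0 : EuclideanSpace ℝ (Fin 2)) 1 \ convexHull ℝ S,
        (ξ i) ^ 2 * γ ‖ξ‖ := by
  simpa [EuclideanSpace.inner_single_left] using stmt14_general hN hL₂ hγ0 hint hder hSfin hScard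
    (fun ξ hξ => (hScirc ξ hξ).le) (w := EuclideanSpace.single i 1) (by simp)
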